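/- Let Δ be the bicyclic graph built as follows: take two vertices t and r joined by three internally disjoint paths S₁: t–a₁–⋯–a_n–r, S₂: t–b₁–⋯–b_n–r, and S₃ of length ℓ ≥ 1 with no trees attached at its internal vertices; attach a rooted tree T_i at a_i and a rooted tree Λ_i at b_i for 1 ≤ i ≤ n, a rooted tree Υ at t and a rooted tree Θ at r. Assume T_i ≅ Λ_i as rooted trees for each i, that Υ is not isomorphic to Θ as a rooted tree, and that ℓ ≠ n+1 or at least one T_i has more than one vertex. Set G_i = Aut(T_i)_{root}, H = Aut(Υ)_{root}, K = Aut(Θ)_{root}. Then Aut(Δ) ≅ H × K × ((G₁ × G₂ × ⋯ × G_n) ≀ Z₂). -/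

import Mathlib

open SimpleGraph

/-- The stabilizer `Aut(G)_v = {f ∈ Aut(G) : f(v) = v}` of a vertex `v` in the automorphism
group of a graph `G`. -/
def autStab {V : Type} (G : SimpleGraph V) (v : V) : Subgroup (G ≃g G) where
  carrier := {f | f v = v}
  one_mem' := rfl
  mul_mem' := by
    intro f g hf hg
    simp only [Set.mem_setOf_eq] at *
    show f (g v) = v
    rw [hg, hf]
  inv_mem' := by
    intro f hf
    simp only [Set.mem_setOf_eq] at *
    calc f⁻¹ v = f⁻¹ (f v) := by rw [hf]
    _ = v := RelIso.inv_apply_self f v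

/-- The swap action of `Z₂` on `G × G`. -/
def swapHom (G : Type) [Group G] : Multiplicative (ZMod 2) →* MulAut (G × G) where
  toFun g := if Multiplicative.toAdd g = 1 then (MulEquiv.prodComm : G × G ≃* G × G) else 1
  map_one' := by
    show (if (0 : ZMod 2) = 1 then (MulEquiv.prodComm : G × G ≃* G × G) else 1) = 1
    norm_num
  map_mul' x y := by
    have h2 : ∀ z : ZMod 2, z = 0 ∨ z = 1 := by decide
    have hs : (MulEquiv.prodComm : G × G ≃* G × G) * MulEquiv.prodComm = 1 := by
      ext z <;> rfl
    show (if Multiplicative.toAdd x + Multiplicative.toAdd y = 1 then _ else _) = _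
    rcases h2 (Multiplicative.toAdd x) with hx | hx <;>
      rcases h2 (Multiplicative.toAdd y) with hy | hy <;>
        simp [hx, hy, hs, show (1 + 1 : ZMod 2) = 0 from rfl,
          show (0 : ZMod 2) ≠ 1 by decide, show (1 : ZMod 2) ≠ 0 by decide]

/-- The wreath product `G ≀ Z₂ = (G × G) ⋊ Z₂`, where the nontrivial element of `Z₂`
swaps the two coordinates. -/
def wreathZ2 (G : Type) [Group G] : Type :=
  (G × G) ⋊[swapHom G] Multiplicative (ZMod 2)

instance (G : Type) [Group G] : Group (wreathZ2 G) :=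
  inferInstanceAs (Group ((G × G) ⋊[swapHom G] Multiplicative (ZMod 2)))

/-- The graph obtained from `base` by attaching, for each `i : ι`, the rooted tree
`(T i, t i)` at the vertex `x i` (identifying the root `t i` with `x i`); the attached trees
are pairwise disjoint and disjoint from `base` except at the attachment vertices. -/
def attachTrees {B : Type} (base : SimpleGraph B) {ι : Type} {W : ι → Type}
    (T : ∀ i, SimpleGraph (W i)) (t : ∀ i, W i) (x : ι → B) :
    SimpleGraph (B ⊕ Σ i, {w : W i // w ≠ t i}) where
  Adj a b :=
    match a, b with
    | .inl a, .inl b => base.Adj a b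
    | .inl a, .inr ⟨i, w⟩ => a = x i ∧ (T i).Adj (t i) w.1
    | .inr ⟨i, w⟩, .inl b => b = x i ∧ (T i).Adj (t i) w.1
    | .inr ⟨i, w⟩, .inr ⟨j, w'⟩ => ∃ h : i = j, (T j).Adj (h ▸ w).1 w'.1
  symm := by
    refine ⟨?_⟩
    rintro (a | ⟨i, w⟩) (b | ⟨j, w'⟩) h
    · exact base.symm.symm _ _ h
    · exact h
    · exact h
    · obtain ⟨rfl, hw⟩ := h
      exact ⟨rfl, (T i).symm.symm _ _ hw⟩
  loopless := by
    refine ⟨?_⟩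
    rintro (a | ⟨i, w⟩) h
    · exact base.loopless.irrefl a h
    · obtain ⟨h', hw⟩ := h
      exact (T i).loopless.irrefl _ hw

/-- Vertices of a theta graph: two hub vertices `u`, `v` joined by three internally disjoint
paths having `p`, `q` and `r` internal vertices respectively. -/
inductive ThetaV (p q r : ℕ) : Type where
  | u : ThetaV p q r
  | v : ThetaV p q r
  | x1 : Fin p → ThetaV p q r
  | x2 : Fin q → ThetaV p q r
  | x3 : Fin r → ThetaV p q r
  deriving DecidableEq

/-- The theta graph: the vertices `u` and `v` joined by three internally disjoint paths of
lengths `p + 1`, `q + 1` and `r + 1`; the internal vertices of each path are indexed starting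
from the end adjacent to `v`. -/
def theta (p q r : ℕ) : SimpleGraph (ThetaV p q r) where
  Adj a b :=
    match a, b with
    | .u, .v => p = 0 ∨ q = 0 ∨ r = 0
    | .v, .u => p = 0 ∨ q = 0 ∨ r = 0
    | .v, .x1 i => i.val = 0
    | .x1 i, .v => i.val = 0
    | .u, .x1 i => i.val = p - 1
    | .x1 i, .u => i.val = p - 1
    | .v, .x2 i => i.val = 0
    | .x2 i, .v => i.val = 0
    | .u, .x2 i => i.val = q - 1
    | .x2 i, .u => i.val = q - 1
    | .v, .x3 i => i.val = 0
    | .x3 i, .v => i.val = 0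
    | .u, .x3 i => i.val = r - 1
    | .x3 i, .u => i.val = r - 1
    | .x1 i, .x1 j => i.val + 1 = j.val ∨ j.val + 1 = i.val
    | .x2 i, .x2 j => i.val + 1 = j.val ∨ j.val + 1 = i.val
    | .x3 i, .x3 j => i.val + 1 = j.val ∨ j.val + 1 = i.val
    | _, _ => False
  symm := by
    refine ⟨?_⟩
    intro a b h
    cases a <;> cases b <;> simp only [] at h ⊢ <;> tauto
  loopless := by
    refine ⟨?_⟩
    intro a h
    cases a <;> simp only [] at h <;> omega

/-- Index type for the trees attached in Corollary 2.5: `T₁, …, T_n` on the first path,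
`Λ₁, …, Λ_n` on the second path, and `Υ`, `Θ` at the hub vertices `t`, `r`. -/
abbrev Stmt5Index (n : ℕ) : Type := (Fin n ⊕ Fin n) ⊕ (Unit ⊕ Unit)

/-- The family of vertex types of the attached trees. -/
def stmt5W {n : ℕ} (WT WΛ : Fin n → Type) (WΥ WΘ : Type) : Stmt5Index n → Type :=
  Sum.elim (Sum.elim WT WΛ) (Sum.elim (fun _ => WΥ) (fun _ => WΘ))

/-- The family of attached trees. -/
def stmt5T {n : ℕ} {WT WΛ : Fin n → Type} {WΥ WΘ : Type}
    (TT : ∀ j, SimpleGraph (WT j)) (TΛ : ∀ j, SimpleGraph (WΛ j))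
    (TΥ : SimpleGraph WΥ) (TΘ : SimpleGraph WΘ) :
    ∀ i, SimpleGraph (stmt5W WT WΛ WΥ WΘ i) :=
  fun i =>
    match i with
    | .inl (.inl j) => TT j
    | .inl (.inr j) => TΛ j
    | .inr (.inl _) => TΥ
    | .inr (.inr _) => TΘ

/-- The family of roots of the attached trees. -/
def stmt5root {n : ℕ} {WT WΛ : Fin n → Type} {WΥ WΘ : Type}
    (tT : ∀ j, WT j) (tΛ : ∀ j, WΛ j) (tΥ : WΥ) (tΘ : WΘ) :
    ∀ i, stmt5W WT WΛ WΥ WΘ i :=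
  fun i =>
    match i with
    | .inl (.inl j) => tT j
    | .inl (.inr j) => tΛ j
    | .inr (.inl _) => tΥ
    | .inr (.inr _) => tΘ

/-- Attachment vertices on the theta graph with hub vertices `t = v` and `r = u`, paths
`S₁ : t–a₁–⋯–a_n–r`, `S₂ : t–b₁–⋯–b_n–r` and `S₃` of length `m + 1`: the tree `T_j` is
attached at `a_j`, `Λ_j` at `b_j`, `Υ` at `t` and `Θ` at `r`. -/
def stmt5x (n m : ℕ) : Stmt5Index n → ThetaV n n m :=
  fun i =>
    match i with
    | .inl (.inl j) => ThetaV.x1 j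
    | .inl (.inr j) => ThetaV.x2 j
    | .inr (.inl _) => ThetaV.v
    | .inr (.inr _) => ThetaV.u

/-- The bicyclic graph of Corollary 2.5. -/
def stmt5Graph (n m : ℕ) {WT WΛ : Fin n → Type} {WΥ WΘ : Type}
    (TT : ∀ j, SimpleGraph (WT j)) (TΛ : ∀ j, SimpleGraph (WΛ j))
    (TΥ : SimpleGraph WΥ) (TΘ : SimpleGraph WΘ)
    (tT : ∀ j, WT j) (tΛ : ∀ j, WΛ j) (tΥ : WΥ) (tΘ : WΘ) :=
  attachTrees (theta n n m) (stmt5T TT TΛ TΥ TΘ) (stmt5root tT tΛ tΥ tΘ) (stmt5x n m)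

/-!
The graph `Δ` is a *rooted sum* over the theta graph: every vertex of the theta graph carries a
rooted tree, a single vertex along the third path. Every vertex of the theta graph has at least two
neighbours within it, whereas in a finite set of vertices a deepest vertex of an attached tree other
than its root has at most one neighbour in the set. An automorphism of `Δ` therefore preserves the
theta graph, and so consists of an automorphism `φ` of the theta graph and rooted isomorphisms from
the tree at each vertex `b` to the tree at `φ b`.

The vertices `t` and `r` are the only ones of degree three in the theta graph, and `φ` cannot
exchange them because `Υ ≇ Θ`. Fixing both, `φ` permutes the three paths. It fixes the third one,
because either the lengths differ or some `T_j` is nontrivial, so `φ` is trivial or the exchange of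
the first two paths. Thus the root-fixing automorphisms of the attached trees form a subgroup
`(H × K) × ((∏ G_j) × (∏ G_j))` of index two, and after identifying `Λ_j` with `T_j` the exchange of
the two paths lifts to an involution, outside this subgroup, which swaps the last two factors.
-/

/-! ### Rooted graphs and rooted sums -/

section RootedGraphs

variable {V V' V'' : Type*} {G : SimpleGraph V} {G' : SimpleGraph V'} {G'' : SimpleGraph V''}

/-- Isomorphisms of rooted graphs `(G, v) ≃ (G', v')`: graph isomorphisms carrying root to root.
The stabilizer `autStab G v` is the case `(G', v') = (G, v)`. -/
abbrev RootedIso (G : SimpleGraph V) (v : V) (G' : SimpleGraph V') (v' : V') :=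
  {e : G ≃g G' // e v = v'}

/-- The identity of a rooted graph. -/
def RootedIso.refl (G : SimpleGraph V) (v : V) : RootedIso G v G v := ⟨.refl, rfl⟩

/-- The inverse of an isomorphism of rooted graphs. -/
def RootedIso.symm {v : V} {v' : V'} (e : RootedIso G v G' v') : RootedIso G' v' G v :=
  ⟨e.1.symm, e.1.symm_apply_eq.2 e.2.symm⟩

/-- The composite of isomorphisms of rooted graphs. -/
def RootedIso.trans {v : V} {v' : V'} {v'' : V''} (e : RootedIso G v G' v')
    (e' : RootedIso G' v' G'' v'') : RootedIso G v G'' v'' :=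
  ⟨e.1.trans e'.1, (congrArg e'.1 e.2).trans e'.2⟩

theorem RootedIso.apply_eq_root_iff {v : V} {v' : V'} (e : RootedIso G v G' v') {w : V} :
    e.1 w = v' ↔ w = v := by
  rw [← e.1.apply_eq_iff_eq (x := w), e.2]

/-- Conjugation by an isomorphism of graphs, as an isomorphism of automorphism groups. -/
def autCongr (e : G ≃g G') : (G ≃g G) ≃* (G' ≃g G') where
  toFun f := (e.symm.trans f).trans e
  invFun f := (e.trans f).trans e.symm
  left_inv f := by ext; simp
  right_inv f := by ext; simp
  map_mul' f g := by ext; simp [RelIso.mul_apply]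

theorem eq_penultimate_of_dist_le (hG : G.IsAcyclic) {r w a : V} {p : G.Walk r w}
    (hp : p.IsPath) (hadj : G.Adj w a) (hdist : G.dist r a ≤ G.dist r w) :
    a = p.penultimate := by
  classical
  obtain ⟨q, hq, hlen⟩ := (p.reachable.trans hadj.reachable).exists_path_of_dist
  have hw : w ∉ q.support := fun hw => by
    have hlt := q.length_takeUntil_lt_length hw hadj.ne
    have hle := dist_le (q.takeUntil w hw)
    omega
  exact hG.eq_penultimate_of_adj_end hp hadj
    (hG.mem_support_of_ne_mem_support_of_adj_of_isPath hp hq hadj hw)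

end RootedGraphs

/-- The rooted sum of a family of rooted graphs `(T b, t b)` over the vertices of `base`: the
disjoint union of the `T b` together with a copy of `base` on the roots `t b`. -/
def rootedSum {B : Type*} (base : SimpleGraph B) {F : B → Type*} (T : ∀ b, SimpleGraph (F b))
    (t : ∀ b, F b) : SimpleGraph (Σ b, F b) where
  Adj x y := (∃ h : x.1 = y.1, (T y.1).Adj (h ▸ x.2) y.2) ∨
    base.Adj x.1 y.1 ∧ x.2 = t x.1 ∧ y.2 = t y.1
  symm := ⟨by
    rintro ⟨b, w⟩ ⟨c, w'⟩ (⟨h, hadj⟩ | ⟨hadj, hw, hw'⟩)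
    · obtain rfl : b = c := h
      exact .inl ⟨rfl, hadj.symm⟩
    · exact .inr ⟨hadj.symm, hw', hw⟩⟩
  loopless := ⟨by
    rintro ⟨b, w⟩ (⟨_, hadj⟩ | ⟨hadj, -⟩)
    · exact hadj.ne rfl
    · exact hadj.ne rfl⟩

namespace rootedSum

section Adjacency

variable {B : Type*} {base : SimpleGraph B} {F : B → Type*} {T : ∀ b, SimpleGraph (F b)}
  {t : ∀ b, F b} {b c : B}

theorem adj_fiber {w w' : F b} : (rootedSum base T t).Adj ⟨b, w⟩ ⟨b, w'⟩ ↔ (T b).Adj w w' := by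
  simp [rootedSum]

theorem adj_of_ne (hbc : b ≠ c) {w : F b} {w' : F c} :
    (rootedSum base T t).Adj ⟨b, w⟩ ⟨c, w'⟩ ↔ base.Adj b c ∧ w = t b ∧ w' = t c := by
  simp [rootedSum, hbc]

theorem adj_root : (rootedSum base T t).Adj ⟨b, t b⟩ ⟨c, t c⟩ ↔ base.Adj b c := by
  rcases eq_or_ne b c with rfl | hbc
  · simp
  · simp [adj_of_ne hbc]

theorem adj_root_left {w : F c} (hw : w ≠ t c) :
    (rootedSum base T t).Adj ⟨b, t b⟩ ⟨c, w⟩ ↔ b = c ∧ (T c).Adj (t c) w := by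
  rcases eq_or_ne b c with rfl | hbc
  · simp [adj_fiber]
  · simp [adj_of_ne hbc, hbc, hw]

theorem exists_fiber_of_adj {w : F b} (hw : w ≠ t b) {x : Σ b, F b}
    (hadj : (rootedSum base T t).Adj ⟨b, w⟩ x) : ∃ w', x = ⟨b, w'⟩ ∧ (T b).Adj w w' := by
  obtain ⟨c, w'⟩ := x
  obtain rfl : b = c := by
    by_contra hbc
    exact hw ((adj_of_ne hbc).1 hadj).2.1
  exact ⟨w', rfl, adj_fiber.1 hadj⟩

/-- A deepest vertex of `S` off the roots would have only its parent as a neighbour in `S`. -/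
theorem snd_eq_root_of_forall_nontrivial (hT : ∀ b, (T b).IsTree) {S : Set (Σ b, F b)}
    (hfin : S.Finite) (hdeg : ∀ x ∈ S, (S ∩ (rootedSum base T t).neighborSet x).Nontrivial)
    {x : Σ b, F b} (hx : x ∈ S) : x.2 = t x.1 := by
  by_contra hroot
  obtain ⟨⟨b, w⟩, ⟨hwS, hw⟩, hmax⟩ := Set.Finite.exists_maximalFor
    (fun x : Σ b, F b => (T x.1).dist (t x.1) x.2) {x ∈ S | x.2 ≠ t x.1}
    (hfin.subset (Set.sep_subset _ _)) ⟨x, hx, hroot⟩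
  obtain ⟨p, hp⟩ := ((hT b).connected (t b) w).exists_isPath
  refine (hdeg _ hwS).not_subsingleton
    (Set.subsingleton_of_forall_eq (⟨b, p.penultimate⟩ : Σ b, F b) ?_)
  rintro y ⟨hyS, hadj⟩
  obtain ⟨w', rfl, hww'⟩ := exists_fiber_of_adj hw hadj
  have hdist : (T b).dist (t b) w' ≤ (T b).dist (t b) w := by
    rcases eq_or_ne w' (t b) with rfl | hw'
    · simp
    · exact (le_total _ _).elim id (hmax ⟨hyS, hw'⟩)
  rw [eq_penultimate_of_dist_le (hT b).isAcyclic hp hww' hdist]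

end Adjacency

section Isomorphisms

variable {B B' : Type*} {base : SimpleGraph B} {base' : SimpleGraph B'}
  {F : B → Type*} {F' : B' → Type*} {T : ∀ b, SimpleGraph (F b)} {T' : ∀ b, SimpleGraph (F' b)}
  {t : ∀ b, F b} {t' : ∀ b, F' b}

/-- The isomorphism of rooted sums induced by an isomorphism `φ` of the bases and rooted
isomorphisms `g b` from the fibre over `b` to the fibre over `φ b`. -/
def congr (φ : base ≃g base') (g : ∀ b, RootedIso (T b) (t b) (T' (φ b)) (t' (φ b))) :
    rootedSum base T t ≃g rootedSum base' T' t' where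
  toEquiv := φ.toEquiv.sigmaCongr fun b => (g b).1.toEquiv
  map_rel_iff' := by
    rintro ⟨b, w⟩ ⟨c, w'⟩
    change (rootedSum base' T' t').Adj ⟨φ b, (g b).1 w⟩ ⟨φ c, (g c).1 w'⟩ ↔ _
    rcases eq_or_ne b c with rfl | hbc
    · rw [adj_fiber, adj_fiber, (g b).1.map_adj_iff]
    · rw [adj_of_ne hbc, adj_of_ne (φ.injective.ne hbc), φ.map_adj_iff,
        (g b).apply_eq_root_iff, (g c).apply_eq_root_iff]

/-- An isomorphism of rooted sums preserves roots if it matches the vertices of the two bases. -/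
def PreservesRoots (f : rootedSum base T t ≃g rootedSum base' T' t') : Prop :=
  ∀ x, (f x).2 = t' (f x).1 ↔ x.2 = t x.1

theorem snd_apply_root [Finite B] (hbase : ∀ b, (base.neighborSet b).Nontrivial)
    (hT' : ∀ b, (T' b).IsTree) (f : rootedSum base T t ≃g rootedSum base' T' t') (b : B) :
    (f ⟨b, t b⟩).2 = t' (f ⟨b, t b⟩).1 := by
  refine snd_eq_root_of_forall_nontrivial (base := base') hT'
    (Set.finite_range fun b => f ⟨b, t b⟩) ?_ ⟨b, rfl⟩
  rintro _ ⟨b, rfl⟩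
  have hinj : Function.Injective fun b => f ⟨b, t b⟩ := fun b c h =>
    congrArg Sigma.fst (f.injective h)
  refine ((hbase b).image hinj).mono ?_
  rintro _ ⟨c, hbc, rfl⟩
  exact ⟨⟨c, rfl⟩, f.map_adj_iff.2 (adj_root.2 hbc)⟩

theorem preservesRoots [Finite B] [Finite B'] (hbase : ∀ b, (base.neighborSet b).Nontrivial)
    (hbase' : ∀ b, (base'.neighborSet b).Nontrivial) (hT : ∀ b, (T b).IsTree)
    (hT' : ∀ b, (T' b).IsTree) (f : rootedSum base T t ≃g rootedSum base' T' t') :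
    PreservesRoots f := by
  intro x
  constructor
  · intro h
    have hx := snd_apply_root hbase' hT f.symm (f x).1
    rwa [← h, Sigma.eta, f.symm_apply_apply] at hx
  · obtain ⟨b, w⟩ := x
    rintro (rfl : w = t b)
    exact snd_apply_root hbase hT' f b

namespace PreservesRoots

variable {f : rootedSum base T t ≃g rootedSum base' T' t'}

theorem symm (hf : PreservesRoots f) : PreservesRoots f.symm := fun x => by
  rw [← hf, f.apply_symm_apply]

theorem apply_root_eq_mk_fst (hf : PreservesRoots f) (b : B) :
    f ⟨b, t b⟩ = ⟨(f ⟨b, t b⟩).1, t' (f ⟨b, t b⟩).1⟩ :=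
  Sigma.ext rfl (heq_of_eq ((hf _).2 rfl))

theorem fst_apply_eq_of_adj (hf : PreservesRoots f) {b : B} {w w' : F b} (hadj : (T b).Adj w w') :
    (f ⟨b, w⟩).1 = (f ⟨b, w'⟩).1 := by
  by_contra hne
  obtain ⟨-, hw, hw'⟩ := (adj_of_ne hne).1 (f.map_adj_iff.2 (adj_fiber.2 hadj))
  exact hadj.ne (((hf _).1 hw).trans ((hf _).1 hw').symm)

theorem fst_apply_eq (hf : PreservesRoots f) (hT : ∀ b, (T b).Preconnected) {b : B} (w w' : F b) :
    (f ⟨b, w⟩).1 = (f ⟨b, w'⟩).1 := by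
  obtain ⟨p⟩ := hT b w w'
  induction p with
  | nil => rfl
  | cons hadj _ ih => exact (hf.fst_apply_eq_of_adj hadj).trans ih

/-- The isomorphism of the bases induced by a root-preserving isomorphism of rooted sums. -/
def baseIso (hf : PreservesRoots f) : base ≃g base' where
  toFun b := (f ⟨b, t b⟩).1
  invFun b := (f.symm ⟨b, t' b⟩).1
  left_inv b := by simp only [← hf.apply_root_eq_mk_fst, f.symm_apply_apply]
  right_inv b := by simp only [← hf.symm.apply_root_eq_mk_fst, f.apply_symm_apply]
  map_rel_iff' {b c} := by
    change base'.Adj (f ⟨b, t b⟩).1 (f ⟨c, t c⟩).1 ↔ base.Adj b c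
    rw [← adj_root (T := T') (t := t'), ← hf.apply_root_eq_mk_fst, ← hf.apply_root_eq_mk_fst,
      f.map_adj_iff, adj_root]

theorem apply_root (hf : PreservesRoots f) (b : B) :
    f ⟨b, t b⟩ = ⟨hf.baseIso b, t' (hf.baseIso b)⟩ :=
  hf.apply_root_eq_mk_fst b

theorem exists_apply_eq (hf : PreservesRoots f) (hT : ∀ b, (T b).Preconnected) (b : B) (w : F b) :
    ∃ w', f ⟨b, w⟩ = ⟨hf.baseIso b, w'⟩ := by
  have hfst : (f ⟨b, w⟩).1 = hf.baseIso b := hf.fst_apply_eq hT w (t b)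
  rw [← hfst]
  exact ⟨_, rfl⟩

theorem exists_apply_eq_mk (hf : PreservesRoots f) (hT' : ∀ b, (T' b).Preconnected) (b : B)
    (w' : F' (hf.baseIso b)) : ∃ w, f ⟨b, w⟩ = ⟨hf.baseIso b, w'⟩ := by
  have hfst : (f.symm ⟨hf.baseIso b, w'⟩).1 = b := by
    rw [hf.symm.fst_apply_eq hT' w' (t' _), ← hf.apply_root, f.symm_apply_apply]
  obtain ⟨w, hw⟩ : ∃ w, f.symm ⟨hf.baseIso b, w'⟩ = ⟨b, w⟩ :=
    ⟨hfst ▸ (f.symm ⟨hf.baseIso b, w'⟩).2, Sigma.ext hfst (by simp)⟩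
  exact ⟨w, by rw [← hw, f.apply_symm_apply]⟩

theorem exists_rootedIso (hf : PreservesRoots f) (hT : ∀ b, (T b).Preconnected)
    (hT' : ∀ b, (T' b).Preconnected) (b : B) :
    ∃ g : RootedIso (T b) (t b) (T' (hf.baseIso b)) (t' (hf.baseIso b)),
      ∀ w, f ⟨b, w⟩ = ⟨hf.baseIso b, g.1 w⟩ := by
  choose g hg using hf.exists_apply_eq hT b
  have hinj : Function.Injective g := fun w w' h =>
    sigma_mk_injective (f.injective ((hg w).trans (h ▸ (hg w').symm)))
  have hsurj : Function.Surjective g := fun w' => by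
    obtain ⟨w, hw⟩ := hf.exists_apply_eq_mk hT' b w'
    exact ⟨w, sigma_mk_injective ((hg w).symm.trans hw)⟩
  have hadj (w w' : F b) : (T' (hf.baseIso b)).Adj (g w) (g w') ↔ (T b).Adj w w' := by
    rw [← adj_fiber (base := base') (t := t'), ← hg, ← hg, f.map_adj_iff, adj_fiber]
  exact ⟨⟨⟨.ofBijective g ⟨hinj, hsurj⟩, hadj _ _⟩,
    sigma_mk_injective ((hg _).symm.trans (hf.apply_root b))⟩, hg⟩

end PreservesRoots

theorem exists_eq_congr [Finite B] [Finite B'] (hbase : ∀ b, (base.neighborSet b).Nontrivial)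
    (hbase' : ∀ b, (base'.neighborSet b).Nontrivial) (hT : ∀ b, (T b).IsTree)
    (hT' : ∀ b, (T' b).IsTree) (f : rootedSum base T t ≃g rootedSum base' T' t') :
    ∃ (φ : base ≃g base') (g : ∀ b, RootedIso (T b) (t b) (T' (φ b)) (t' (φ b))),
      f = congr φ g := by
  have hf := preservesRoots hbase hbase' hT hT' f
  choose g hg using hf.exists_rootedIso (fun b => (hT b).connected.preconnected)
    fun b => (hT' b).connected.preconnected
  exact ⟨hf.baseIso, g, RelIso.ext fun ⟨b, w⟩ => hg b w⟩

end Isomorphisms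

section Fiberwise

variable {B : Type*} {base : SimpleGraph B} {F : B → Type} {T : ∀ b, SimpleGraph (F b)}
  {t : ∀ b, F b}

/-- The action on a rooted sum of families of root-fixing automorphisms of the fibres. -/
def fiberwise (base : SimpleGraph B) (T : ∀ b, SimpleGraph (F b)) (t : ∀ b, F b) :
    (∀ b, autStab (T b) (t b)) →* (rootedSum base T t ≃g rootedSum base T t) where
  toFun g := congr 1 fun b => ⟨(g b).1, (g b).2⟩
  map_one' := rfl
  map_mul' _ _ := rfl

theorem fiberwise_injective : Function.Injective (fiberwise base T t) := fun _ _ hgh =>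
  funext fun b => Subtype.ext <| RelIso.ext fun w =>
    sigma_mk_injective (DFunLike.congr_fun hgh (⟨b, w⟩ : Σ b, F b))

theorem congr_mul_congr (φ ψ : base ≃g base) (g : ∀ b, RootedIso (T b) (t b) (T (φ b)) (t (φ b)))
    (h : ∀ b, RootedIso (T b) (t b) (T (ψ b)) (t (ψ b))) :
    congr φ g * congr ψ h = congr (φ * ψ) fun b => (h b).trans (g (ψ b)) :=
  RelIso.ext fun _ => rfl

theorem congr_mem_range_fiberwise {φ : base ≃g base} (hφ : φ = 1)
    (g : ∀ b, RootedIso (T b) (t b) (T (φ b)) (t (φ b))) :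
    congr φ g ∈ (fiberwise base T t).range := by
  subst hφ
  exact ⟨fun b => ⟨(g b).1, (g b).2⟩, rfl⟩

end Fiberwise

section AttachTrees

variable {B ι : Type} {base : SimpleGraph B} {W : ι → Type} {T : ∀ i, SimpleGraph (W i)}
  {t : ∀ i, W i} {x : ι → B} {F : B → Type*} {T' : ∀ b, SimpleGraph (F b)} {t' : ∀ b, F b}
  (γ : ∀ i, RootedIso (T i) (t i) (T' (x i)) (t' (x i)))

/-- The vertex map that identifies the graph obtained from `base` by attaching trees with a rooted
sum over `base`, given rooted isomorphisms from the attached trees to the fibres. -/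
def ofAttachTrees : B ⊕ (Σ i, {w : W i // w ≠ t i}) → Σ b, F b :=
  Sum.elim (fun b => ⟨b, t' b⟩) fun z => ⟨x z.1, (γ z.1).1 z.2.1⟩

theorem ofAttachTrees_injective (hx : Function.Injective x) :
    Function.Injective (ofAttachTrees γ) := by
  have root_ne (b : B) (i : ι) (w : {w : W i // w ≠ t i}) :
      (⟨b, t' b⟩ : Σ b, F b) ≠ ⟨x i, (γ i).1 w⟩ := fun h => by
    obtain rfl : b = x i := congrArg Sigma.fst h
    exact w.2 ((γ i).apply_eq_root_iff.1 (sigma_mk_injective h).symm)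
  rintro (b | ⟨i, w⟩) (c | ⟨j, w'⟩) h
  · exact congrArg (Sum.inl ∘ Sigma.fst) h
  · exact (root_ne _ _ _ h).elim
  · exact (root_ne _ _ _ h.symm).elim
  · obtain rfl : i = j := hx (congrArg Sigma.fst h)
    obtain rfl : w = w' := Subtype.ext ((γ i).1.injective (sigma_mk_injective h))
    rfl

theorem ofAttachTrees_surjective (hcover : ∀ b (w : F b), w ≠ t' b → b ∈ Set.range x) :
    Function.Surjective (ofAttachTrees γ) := by
  rintro ⟨b, w⟩
  by_cases hw : w = t' b
  · exact ⟨.inl b, by rw [hw]; rfl⟩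
  · obtain ⟨i, rfl⟩ := hcover b w hw
    have hpre : (γ i).1.symm w ≠ t i := by
      rwa [Ne, ← (γ i).apply_eq_root_iff, (γ i).1.apply_symm_apply]
    exact ⟨.inr ⟨i, _, hpre⟩, congrArg (Sigma.mk (x i)) ((γ i).1.apply_symm_apply w)⟩

theorem adj_ofAttachTrees_inl_inr (b : B) (i : ι) (w : {w : W i // w ≠ t i}) :
    (rootedSum base T' t').Adj (ofAttachTrees γ (.inl b)) (ofAttachTrees γ (.inr ⟨i, w⟩)) ↔
      b = x i ∧ (T i).Adj (t i) w := by
  refine (adj_root_left ((γ i).apply_eq_root_iff.not.2 w.2)).trans ?_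
  rw [← (γ i).1.map_adj_iff (v := t i), (γ i).2]

theorem adj_ofAttachTrees_inr_inr (hx : Function.Injective x) (i j : ι)
    (w : {w : W i // w ≠ t i}) (w' : {w : W j // w ≠ t j}) :
    (rootedSum base T' t').Adj (ofAttachTrees γ (.inr ⟨i, w⟩)) (ofAttachTrees γ (.inr ⟨j, w'⟩)) ↔
      ∃ h : i = j, (T j).Adj (h ▸ w).1 w'.1 := by
  rcases eq_or_ne i j with rfl | hij
  · refine adj_fiber.trans ((γ i).1.map_adj_iff.trans ?_)
    simp
  · refine (adj_of_ne (hx.ne hij)).trans ?_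
    simp [hij, (γ i).apply_eq_root_iff, w.2]

/-- Attaching rooted trees yields a rooted sum whose fibres are the attached trees, and single
vertices elsewhere. -/
noncomputable def attachTreesIso (hx : Function.Injective x)
    (hcover : ∀ b (w : F b), w ≠ t' b → b ∈ Set.range x) :
    attachTrees base T t x ≃g rootedSum base T' t' where
  toEquiv := .ofBijective (ofAttachTrees γ)
    ⟨ofAttachTrees_injective γ hx, ofAttachTrees_surjective γ hcover⟩
  map_rel_iff' := by
    rintro (b | ⟨i, w⟩) (c | ⟨j, w'⟩)
    · exact adj_root
    · exact adj_ofAttachTrees_inl_inr γ b j w'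
    · exact (adj_comm _ _ _).trans (adj_ofAttachTrees_inl_inr γ c i w)
    · exact adj_ofAttachTrees_inr_inr γ hx i j w w'

end AttachTrees

end rootedSum

/-! ### Automorphisms of theta graphs -/

namespace theta

section Paths

variable {p q r : ℕ}

/-- The number of internal vertices of the path `c` of `theta p q r`. -/
def numInternal (p q r : ℕ) (c : Fin 3) : ℕ := ![p, q, r] c

/-- The internal vertices of the path `c` of `theta p q r`, numbered from the end at `v`. -/
def internal : (c : Fin 3) → Fin (numInternal p q r c) → ThetaV p q r
  | 0 => ThetaV.x1
  | 1 => ThetaV.x2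
  | 2 => ThetaV.x3

/-- The vertex at distance `k` from `v` along the path `c` of `theta p q r`, which is `u` when `k`
exceeds the number of internal vertices. -/
def pathVertex (c : Fin 3) : ℕ → ThetaV p q r
  | 0 => .v
  | k + 1 => if h : k < numInternal p q r c then internal c ⟨k, h⟩ else .u

theorem eq_u_or_eq_v_or_eq_internal (a : ThetaV p q r) :
    a = .u ∨ a = .v ∨ ∃ c i, a = internal c i := by
  rcases a with _ | _ | i | i | i
  · exact .inl rfl
  · exact .inr (.inl rfl)
  · exact .inr (.inr ⟨0, i, rfl⟩)
  · exact .inr (.inr ⟨1, i, rfl⟩)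
  · exact .inr (.inr ⟨2, i, rfl⟩)

theorem internal_ne_u (c : Fin 3) (i : Fin (numInternal p q r c)) : internal c i ≠ .u := by
  fin_cases c <;> nofun

theorem internal_ne_v (c : Fin 3) (i : Fin (numInternal p q r c)) : internal c i ≠ .v := by
  fin_cases c <;> nofun

theorem internal_injective (c : Fin 3) :
    Function.Injective (internal c : Fin (numInternal p q r c) → ThetaV p q r) := by
  fin_cases c
  · exact fun _ _ h => ThetaV.x1.inj h
  · exact fun _ _ h => ThetaV.x2.inj h
  · exact fun _ _ h => ThetaV.x3.inj h

theorem eq_of_internal_eq {c d : Fin 3} {i : Fin (numInternal p q r c)}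
    {j : Fin (numInternal p q r d)} (h : (internal c i : ThetaV p q r) = internal d j) :
    c = d := by
  fin_cases c <;> fin_cases d <;> first | rfl | cases h

theorem internal_inj {c d : Fin 3} {i : Fin (numInternal p q r c)}
    {j : Fin (numInternal p q r d)} :
    (internal c i : ThetaV p q r) = internal d j ↔ c = d ∧ i.val = j.val := by
  constructor
  · intro h
    obtain rfl := eq_of_internal_eq h
    exact ⟨rfl, congrArg Fin.val (internal_injective c h)⟩
  · rintro ⟨rfl, h⟩
    rw [Fin.ext h]

theorem pathVertex_eq_v_iff {c : Fin 3} {k : ℕ} :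
    (pathVertex c k : ThetaV p q r) = .v ↔ k = 0 := by
  cases k with
  | zero => simp [pathVertex]
  | succ k => by_cases hk : k < numInternal p q r c <;> simp [pathVertex, hk, internal_ne_v]

theorem pathVertex_eq_u_iff {c : Fin 3} {k : ℕ} :
    (pathVertex c k : ThetaV p q r) = .u ↔ numInternal p q r c < k := by
  cases k with
  | zero => simp [pathVertex]
  | succ k =>
    by_cases hk : k < numInternal p q r c
    · simp [pathVertex, hk, internal_ne_u]
    · simp [pathVertex, hk, Nat.lt_succ_iff.2 (not_lt.1 hk)]

theorem internal_eq_pathVertex_iff {c d : Fin 3} {i : Fin (numInternal p q r c)} {k : ℕ} :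
    internal c i = pathVertex d k ↔ c = d ∧ k = i + 1 := by
  cases k with
  | zero => simp [pathVertex, internal_ne_v]
  | succ k =>
    by_cases hk : k < numInternal p q r d
    · simp [pathVertex, hk, internal_inj, eq_comm]
    · simp only [pathVertex, hk, dite_false, internal_ne_u, false_iff]
      rintro ⟨rfl, h⟩
      omega

theorem pathVertex_succ_inj {c d : Fin 3} {k l : ℕ} (hk : k < numInternal p q r c) :
    (pathVertex c (k + 1) : ThetaV p q r) = pathVertex d l ↔ c = d ∧ l = k + 1 := by
  have hinternal : pathVertex c (k + 1) = internal c ⟨k, hk⟩ := dif_pos hk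
  rw [hinternal, internal_eq_pathVertex_iff]

theorem exists_eq_pathVertex (a : ThetaV p q r) : ∃ c k, a = pathVertex c k := by
  rcases eq_u_or_eq_v_or_eq_internal a with rfl | rfl | ⟨c, i, rfl⟩
  · exact ⟨0, _, (pathVertex_eq_u_iff.2 (Nat.lt_succ_self _)).symm⟩
  · exact ⟨0, 0, rfl⟩
  · exact ⟨c, i + 1, internal_eq_pathVertex_iff.2 ⟨rfl, rfl⟩⟩

theorem eq_u_or_eq_v_or_eq_pathVertex_succ (a : ThetaV p q r) :
    a = .u ∨ a = .v ∨ ∃ c k, k < numInternal p q r c ∧ a = pathVertex c (k + 1) := by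
  rcases eq_u_or_eq_v_or_eq_internal a with rfl | rfl | ⟨c, i, rfl⟩
  · exact .inl rfl
  · exact .inr (.inl rfl)
  · exact .inr (.inr ⟨c, i, i.isLt, internal_eq_pathVertex_iff.2 ⟨rfl, rfl⟩⟩)

theorem iso_ext {φ ψ : theta p q r ≃g theta p q r}
    (h : ∀ c k, φ (pathVertex c k) = ψ (pathVertex c k)) : φ = ψ :=
  RelIso.ext fun a => by
    obtain ⟨c, k, rfl⟩ := exists_eq_pathVertex a
    exact h c k

theorem adj_v_u : (theta p q r).Adj .v .u ↔ ∃ c, numInternal p q r c = 0 := by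
  simp [theta, numInternal, Fin.exists_fin_succ]

theorem adj_v_internal {c : Fin 3} {i : Fin (numInternal p q r c)} :
    (theta p q r).Adj .v (internal c i) ↔ i.val = 0 := by
  fin_cases c <;> rfl

theorem adj_internal_u {c : Fin 3} {i : Fin (numInternal p q r c)} :
    (theta p q r).Adj (internal c i) .u ↔ i.val + 1 = numInternal p q r c := by
  have hadj : (theta p q r).Adj (internal c i) .u ↔ i.val = numInternal p q r c - 1 := by
    fin_cases c <;> rfl
  rw [hadj]
  omega

theorem adj_internal_internal {c d : Fin 3} {i : Fin (numInternal p q r c)}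
    {j : Fin (numInternal p q r d)} :
    (theta p q r).Adj (internal c i) (internal d j) ↔
      c = d ∧ (i.val + 1 = j.val ∨ j.val + 1 = i.val) := by
  fin_cases c <;> fin_cases d <;> simp [theta, internal]

theorem adj_pathVertex_succ {c : Fin 3} {k : ℕ} (hk : k ≤ numInternal p q r c) :
    (theta p q r).Adj (pathVertex c k) (pathVertex c (k + 1)) := by
  rcases k with _ | k
  · rcases Nat.eq_zero_or_pos (numInternal p q r c) with hc | hc
    · simpa [pathVertex, hc] using adj_v_u.2 ⟨c, hc⟩
    · simp [pathVertex, hc, adj_v_internal]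
  · rcases hk.eq_or_lt with hc | hc
    · simp [pathVertex, ← hc, adj_internal_u]
    · simp [pathVertex, hc, Nat.lt_of_succ_lt hc, adj_internal_internal]

theorem neighborSet_v :
    (theta p q r).neighborSet .v = Set.range fun c => pathVertex c 1 := by
  refine subset_antisymm (fun b hb => ?_) (Set.range_subset_iff.2 fun c =>
    adj_pathVertex_succ (Nat.zero_le _))
  rcases eq_u_or_eq_v_or_eq_internal b with rfl | rfl | ⟨c, i, rfl⟩
  · obtain ⟨c, hc⟩ := adj_v_u.1 hb
    exact ⟨c, pathVertex_eq_u_iff.2 (by omega)⟩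
  · exact (notMem_neighborSet_self _ hb).elim
  · have hi := adj_v_internal.1 hb
    exact ⟨c, (internal_eq_pathVertex_iff.2 ⟨rfl, by omega⟩).symm⟩

theorem neighborSet_u :
    (theta p q r).neighborSet .u = Set.range fun c => pathVertex c (numInternal p q r c) := by
  refine subset_antisymm (fun b hb => ?_) (Set.range_subset_iff.2 fun c => ?_)
  · rcases eq_u_or_eq_v_or_eq_internal b with rfl | rfl | ⟨c, i, rfl⟩
    · exact (notMem_neighborSet_self _ hb).elim
    · obtain ⟨c, hc⟩ := adj_v_u.1 hb.symm
      exact ⟨c, pathVertex_eq_v_iff.2 hc⟩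
    · have hi := adj_internal_u.1 hb.symm
      exact ⟨c, (internal_eq_pathVertex_iff.2 ⟨rfl, hi.symm⟩).symm⟩
  · have hu : (pathVertex c (numInternal p q r c + 1) : ThetaV p q r) = .u :=
      pathVertex_eq_u_iff.2 (Nat.lt_succ_self _)
    exact hu ▸ (adj_pathVertex_succ le_rfl).symm

theorem neighborSet_pathVertex_succ {c : Fin 3} {k : ℕ} (hk : k < numInternal p q r c) :
    (theta p q r).neighborSet (pathVertex c (k + 1)) =
      {pathVertex c k, pathVertex c (k + 2)} := by
  refine subset_antisymm (fun b hb => ?_) (Set.pair_subset (adj_pathVertex_succ hk.le).symm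
    (adj_pathVertex_succ hk))
  have hinternal : pathVertex c (k + 1) = internal c ⟨k, hk⟩ := dif_pos hk
  rw [mem_neighborSet, hinternal] at hb
  rcases eq_u_or_eq_v_or_eq_internal b with rfl | rfl | ⟨d, i, rfl⟩
  · have hlast := adj_internal_u.1 hb
    exact .inr (pathVertex_eq_u_iff.2 (by simp only at hlast; omega)).symm
  · have hfirst := adj_v_internal.1 hb.symm
    exact .inl (pathVertex_eq_v_iff.2 hfirst).symm
  · obtain ⟨rfl, hnext | hprev⟩ := adj_internal_internal.1 hb
    · exact .inr (internal_eq_pathVertex_iff.2 ⟨rfl, by simp only at hnext; omega⟩)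
    · exact .inl (internal_eq_pathVertex_iff.2 ⟨rfl, hprev.symm⟩)

end Paths

section Degrees

/-- At most one of the three paths of `theta p q r` is a single edge. The simple graph `theta p q r`
merges parallel edges, so this is when the three paths are really distinct. -/
def IsProper (p q r : ℕ) : Prop := {c | numInternal p q r c = 0}.Subsingleton

variable {p q r : ℕ}

instance : Finite (ThetaV p q r) := by
  have huniv : (Set.univ : Set (ThetaV p q r)) =
      insert .u (insert .v (⋃ c, Set.range (internal c))) := by
    refine (Set.eq_univ_of_forall fun a => ?_).symm
    rcases eq_u_or_eq_v_or_eq_internal a with rfl | rfl | ⟨c, i, rfl⟩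
    · exact .inl rfl
    · exact .inr (.inl rfl)
    · exact .inr (.inr (Set.mem_iUnion.2 ⟨c, i, rfl⟩))
  refine Set.finite_univ_iff.1 (huniv ▸ ?_)
  exact ((Set.finite_iUnion fun c => Set.finite_range _).insert _).insert _

theorem pathVertex_ne_pathVertex_add_two {c : Fin 3} {k : ℕ} (hk : k < numInternal p q r c) :
    (pathVertex c k : ThetaV p q r) ≠ pathVertex c (k + 2) := by
  rcases k with _ | k
  · exact fun h => by simpa using pathVertex_eq_v_iff.1 h.symm
  · exact fun h => by simpa using ((pathVertex_succ_inj (by omega)).1 h).2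

theorem ncard_neighborSet_pathVertex_succ {c : Fin 3} {k : ℕ} (hk : k < numInternal p q r c) :
    ((theta p q r).neighborSet (pathVertex c (k + 1))).ncard = 2 := by
  rw [neighborSet_pathVertex_succ hk, Set.ncard_pair (pathVertex_ne_pathVertex_add_two hk)]

theorem pathVertex_one_injective (h : IsProper p q r) :
    Function.Injective fun c => (pathVertex c 1 : ThetaV p q r) := by
  intro c d (hcd : pathVertex c 1 = pathVertex d 1)
  rcases Nat.eq_zero_or_pos (numInternal p q r c) with hc | hc
  · have hd : numInternal p q r d < 1 := by
      rw [← pathVertex_eq_u_iff, ← hcd, pathVertex_eq_u_iff]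
      omega
    exact h hc (Nat.lt_one_iff.1 hd)
  · exact ((pathVertex_succ_inj hc).1 hcd).1

theorem pathVertex_numInternal_injective (h : IsProper p q r) :
    Function.Injective fun c => (pathVertex c (numInternal p q r c) : ThetaV p q r) := by
  intro c d (hcd : pathVertex c _ = pathVertex d _)
  rcases hc : numInternal p q r c with _ | k
  · rw [hc] at hcd
    exact h hc (pathVertex_eq_v_iff.1 hcd.symm)
  · rw [hc] at hcd
    exact ((pathVertex_succ_inj (by omega)).1 hcd).1

theorem ncard_neighborSet_u (h : IsProper p q r) : ((theta p q r).neighborSet .u).ncard = 3 := by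
  rw [neighborSet_u, Set.ncard_range_of_injective (pathVertex_numInternal_injective h),
    Nat.card_fin]

theorem ncard_neighborSet_v (h : IsProper p q r) : ((theta p q r).neighborSet .v).ncard = 3 := by
  rw [neighborSet_v, Set.ncard_range_of_injective (pathVertex_one_injective h), Nat.card_fin]

theorem neighborSet_nontrivial (h : IsProper p q r) (a : ThetaV p q r) :
    ((theta p q r).neighborSet a).Nontrivial := by
  rw [← Set.one_lt_ncard_iff_nontrivial]
  rcases eq_u_or_eq_v_or_eq_pathVertex_succ a with rfl | rfl | ⟨c, k, hk, rfl⟩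
  · simp [ncard_neighborSet_u h]
  · simp [ncard_neighborSet_v h]
  · simp [ncard_neighborSet_pathVertex_succ hk]

theorem eq_u_or_eq_v_of_ncard_neighborSet {a : ThetaV p q r}
    (ha : ((theta p q r).neighborSet a).ncard = 3) : a = .u ∨ a = .v := by
  rcases eq_u_or_eq_v_or_eq_pathVertex_succ a with rfl | rfl | ⟨c, k, hk, rfl⟩
  · exact .inl rfl
  · exact .inr rfl
  · simp [ncard_neighborSet_pathVertex_succ hk] at ha

end Degrees

section Automorphisms

variable {p q r : ℕ} {φ : theta p q r ≃g theta p q r}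

theorem apply_v_eq_u_or_eq_v (h : IsProper p q r) (φ : theta p q r ≃g theta p q r) :
    φ .v = .u ∨ φ .v = .v :=
  eq_u_or_eq_v_of_ncard_neighborSet <|
    (Nat.card_congr (φ.mapNeighborSet .v)).symm.trans (ncard_neighborSet_v h)

theorem apply_u_eq_u (h : IsProper p q r) (hv : φ .v = .v) : φ .u = .u := by
  have hhub : φ .u = .u ∨ φ .u = .v := eq_u_or_eq_v_of_ncard_neighborSet <|
    (Nat.card_congr (φ.mapNeighborSet .u)).symm.trans (ncard_neighborSet_u h)
  exact hhub.resolve_right fun hu => nomatch φ.injective (hu.trans hv.symm)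

theorem exists_perm_apply_pathVertex_one (h : IsProper p q r) (hv : φ .v = .v) :
    ∃ s : Equiv.Perm (Fin 3), ∀ c, φ (pathVertex c 1) = pathVertex (s c) 1 := by
  have hmem (c : Fin 3) : φ (pathVertex c 1) ∈ Set.range fun d => pathVertex d 1 := by
    rw [← neighborSet_v, mem_neighborSet]
    nth_rw 1 [← hv]
    exact φ.map_adj_iff.2 (adj_pathVertex_succ (Nat.zero_le _))
  choose s hs using hmem
  have hinj : Function.Injective s := fun c d hcd => by
    refine pathVertex_one_injective h (φ.injective ?_)
    simp only [← hs, hcd]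
  exact ⟨.ofBijective s (Finite.injective_iff_bijective.1 hinj), fun c => (hs c).symm⟩

theorem lt_numInternal_of_apply_pathVertex_succ (hu : φ .u = .u) {c d : Fin 3} {k : ℕ}
    (hk : k < numInternal p q r c) (hφ : φ (pathVertex c (k + 1)) = pathVertex d (k + 1)) :
    k < numInternal p q r d := by
  by_contra! hd
  have heq : φ (pathVertex c (k + 1)) = φ .u := by
    rw [hφ, hu, pathVertex_eq_u_iff]
    omega
  have hc := pathVertex_eq_u_iff.1 (φ.injective heq)
  omega

/-- An internal vertex has only two neighbours, so the image of one edge determines the image of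
the next. -/
theorem apply_pathVertex_add_two (hu : φ .u = .u) {c d : Fin 3} {k : ℕ}
    (hk : k < numInternal p q r c) (hφ : φ (pathVertex c k) = pathVertex d k)
    (hφ' : φ (pathVertex c (k + 1)) = pathVertex d (k + 1)) :
    φ (pathVertex c (k + 2)) = pathVertex d (k + 2) := by
  have hd := lt_numInternal_of_apply_pathVertex_succ hu hk hφ'
  have hmem : φ (pathVertex c (k + 2)) ∈ (theta p q r).neighborSet (pathVertex d (k + 1)) :=
    hφ' ▸ φ.map_adj_iff.2 (adj_pathVertex_succ hk)
  rw [neighborSet_pathVertex_succ hd, ← hφ] at hmem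
  exact hmem.resolve_left fun hback => pathVertex_ne_pathVertex_add_two hk (φ.injective hback.symm)

theorem apply_pathVertex_of_apply_one (hu : φ .u = .u) (hv : φ .v = .v) {c d : Fin 3}
    (hone : φ (pathVertex c 1) = pathVertex d 1) {k : ℕ} (hk : k ≤ numInternal p q r c + 1) :
    φ (pathVertex c k) = pathVertex d k := by
  induction k using Nat.twoStepInduction with
  | zero => exact hv
  | one => exact hone
  | more k ih ih' =>
    exact apply_pathVertex_add_two hu (by omega) (ih (by omega)) (ih' (by omega))

theorem numInternal_eq_of_apply_one (hu : φ .u = .u) (hv : φ .v = .v) {c d : Fin 3}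
    (hone : φ (pathVertex c 1) = pathVertex d 1) : numInternal p q r d = numInternal p q r c := by
  have hle : numInternal p q r d < numInternal p q r c + 1 := by
    rw [← pathVertex_eq_u_iff, ← apply_pathVertex_of_apply_one hu hv hone le_rfl, ← hu,
      φ.injective.eq_iff, pathVertex_eq_u_iff]
    omega
  have hge : numInternal p q r c ≤ numInternal p q r d := le_of_forall_lt fun k hk =>
    lt_numInternal_of_apply_pathVertex_succ hu hk
      (apply_pathVertex_of_apply_one hu hv hone (by omega))
  omega

theorem exists_perm_apply_pathVertex (h : IsProper p q r) (hv : φ .v = .v) :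
    ∃ s : Equiv.Perm (Fin 3), (∀ c, numInternal p q r (s c) = numInternal p q r c) ∧
      ∀ c k, φ (pathVertex c k) = pathVertex (s c) k := by
  have hu := apply_u_eq_u h hv
  obtain ⟨s, hone⟩ := exists_perm_apply_pathVertex_one h hv
  have hs (c : Fin 3) := numInternal_eq_of_apply_one hu hv (hone c)
  refine ⟨s, hs, fun c k => ?_⟩
  rcases le_or_gt k (numInternal p q r c + 1) with hk | hk
  · exact apply_pathVertex_of_apply_one hu hv (hone c) hk
  · rw [pathVertex_eq_u_iff.2 (by omega), hu, pathVertex_eq_u_iff.2 (hs c ▸ by omega)]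

end Automorphisms

section Swap

variable {n m : ℕ}

/-- The automorphism of `theta n n m` exchanging the two paths with `n` internal vertices. -/
def swapPaths (n m : ℕ) : theta n n m ≃g theta n n m where
  toFun
    | .u => .u
    | .v => .v
    | .x1 j => .x2 j
    | .x2 j => .x1 j
    | .x3 j => .x3 j
  invFun
    | .u => .u
    | .v => .v
    | .x1 j => .x2 j
    | .x2 j => .x1 j
    | .x3 j => .x3 j
  left_inv := by rintro (_ | _ | _ | _ | _) <;> rfl
  right_inv := by rintro (_ | _ | _ | _ | _) <;> rfl
  map_rel_iff' := by rintro (_ | _ | _ | _ | _) (_ | _ | _ | _ | _) <;> simp [theta]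

theorem swapPaths_mul_self : swapPaths n m * swapPaths n m = 1 :=
  RelIso.ext (swapPaths n m).left_inv

theorem swapPaths_apply_pathVertex (c : Fin 3) (k : ℕ) :
    swapPaths n m (pathVertex c k) = pathVertex (Equiv.swap 0 1 c) k := by
  rcases k with _ | k
  · rfl
  · fin_cases c <;> exact apply_dite (swapPaths n m) _ _ _

theorem numInternal_of_ne_two {c : Fin 3} (hc : c ≠ 2) : numInternal n n m c = n := by
  fin_cases c
  · rfl
  · rfl
  · exact (hc rfl).elim

theorem isProper_of_pos (hn : 0 < n) : IsProper n n m := by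
  have hzero (c : Fin 3) (hc : numInternal n n m c = 0) : c = 2 := by
    by_contra hc2
    exact hn.ne' ((numInternal_of_ne_two hc2).symm.trans hc)
  exact fun c hc d hd => (hzero c hc).trans (hzero d hd).symm

theorem eq_one_or_eq_swapPaths {φ : theta n n m ≃g theta n n m} {s : Equiv.Perm (Fin 3)}
    (hs : s 2 = 2) (hφ : ∀ c k, φ (pathVertex c k) = pathVertex (s c) k) :
    φ = 1 ∨ φ = swapPaths n m := by
  have hperm : ∀ s : Equiv.Perm (Fin 3), s 2 = 2 → s = 1 ∨ s = Equiv.swap 0 1 := by decide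
  rcases hperm s hs with rfl | rfl
  · exact .inl (iso_ext hφ)
  · exact .inr (iso_ext fun c k => (hφ c k).trans (swapPaths_apply_pathVertex c k).symm)

end Swap

end theta

/-! ### Recognizing a wreath product with `Z₂` -/

section WreathRecognition

theorem eq_one_or_eq_ofAdd_one (σ : Multiplicative (ZMod 2)) :
    σ = 1 ∨ σ = Multiplicative.ofAdd 1 := by
  revert σ
  decide

theorem swapHom_ofAdd_one (G : Type) [Group G] :
    swapHom G (Multiplicative.ofAdd 1) = MulEquiv.prodComm := rfl

variable {A G : Type} {M : Type*} [Group A] [Group G] [Group M]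

/-- The homomorphism from the group of order two determined by an element `s` with `s * s = 1`. -/
def involutionHom (s : M) (hs : s * s = 1) : Multiplicative (ZMod 2) →* M where
  toFun σ := s ^ σ.toAdd.val
  map_one' := by simp
  map_mul' σ τ := by
    rcases eq_one_or_eq_ofAdd_one σ with rfl | rfl <;>
      rcases eq_one_or_eq_ofAdd_one τ with rfl | rfl <;>
        simp [ZMod.val_one, CharTwo.add_self_eq_zero, hs]

theorem involutionHom_ofAdd_one {s : M} (hs : s * s = 1) :
    involutionHom s hs (Multiplicative.ofAdd 1) = s := pow_one s

variable {f : A × G × G →* M} {s : M}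

theorem involutionHom_mul (hs : s * s = 1)
    (hcomm : ∀ a x y, s * f (a, x, y) = f (a, y, x) * s) (σ : Multiplicative (ZMod 2)) (a : A)
    (w : G × G) :
    involutionHom s hs σ * f (a, w) = f (a, swapHom G σ w) * involutionHom s hs σ := by
  rcases eq_one_or_eq_ofAdd_one σ with rfl | rfl
  · simp
  · rw [involutionHom_ofAdd_one, swapHom_ofAdd_one]
    exact hcomm a w.1 w.2

/-- The extension of `f : A × (G × G) →* M` to `A × (G ≀ Z₂)` sending the generator of `Z₂` to `s`,
where conjugation by `s` swaps the two factors `G`. -/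
def wreathLift (hs : s * s = 1) (hcomm : ∀ a x y, s * f (a, x, y) = f (a, y, x) * s) :
    A × wreathZ2 G →* M where
  toFun z := f (z.1, z.2.left) * involutionHom s hs z.2.right
  map_one' := by
    change f 1 * involutionHom s hs 1 = 1
    simp
  map_mul' := by
    rintro ⟨a, w, σ⟩ ⟨a', w', σ'⟩
    change f ((a, w) * (a', swapHom G σ w')) * involutionHom s hs (σ * σ') =
      f (a, w) * involutionHom s hs σ * (f (a', w') * involutionHom s hs σ')
    rw [map_mul, map_mul, mul_assoc, mul_assoc, ← mul_assoc _ (f (a', w')),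
      involutionHom_mul hs hcomm, mul_assoc]

theorem wreathLift_injective (hs : s * s = 1)
    (hcomm : ∀ a x y, s * f (a, x, y) = f (a, y, x) * s) (hf : Function.Injective f)
    (hrange : s ∉ f.range) : Function.Injective (wreathLift hs hcomm) := by
  refine (injective_iff_map_eq_one _).2 ?_
  rintro ⟨a, w, σ⟩ (h : f (a, w) * involutionHom s hs σ = 1)
  rcases eq_one_or_eq_ofAdd_one σ with rfl | rfl
  · rw [map_one, mul_one, map_eq_one_iff f hf] at h
    obtain ⟨rfl, rfl⟩ := Prod.mk.inj h
    rfl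
  · rw [involutionHom_ofAdd_one] at h
    exact (hrange ⟨(a, w)⁻¹, by rw [map_inv, inv_eq_of_mul_eq_one_right h]⟩).elim

theorem wreathLift_surjective (hs : s * s = 1)
    (hcomm : ∀ a x y, s * f (a, x, y) = f (a, y, x) * s)
    (hcover : ∀ z, z ∈ f.range ∨ z * s ∈ f.range) : Function.Surjective (wreathLift hs hcomm) := by
  intro z
  rcases hcover z with ⟨⟨a, w⟩, hw⟩ | ⟨⟨a, w⟩, hw⟩
  · refine ⟨(a, ⟨w, 1⟩), ?_⟩
    change f (a, w) * involutionHom s hs 1 = z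
    rw [map_one, mul_one, hw]
  · refine ⟨(a, ⟨w, Multiplicative.ofAdd 1⟩), ?_⟩
    change f (a, w) * involutionHom s hs (Multiplicative.ofAdd 1) = z
    rw [involutionHom_ofAdd_one, hw, mul_assoc, hs, mul_one]

theorem nonempty_mulEquiv_prod_wreathZ2 (hf : Function.Injective f) (hs : s * s = 1)
    (hcomm : ∀ a x y, s * f (a, x, y) = f (a, y, x) * s) (hrange : s ∉ f.range)
    (hcover : ∀ z, z ∈ f.range ∨ z * s ∈ f.range) : Nonempty (M ≃* A × wreathZ2 G) :=
  ⟨(MulEquiv.ofBijective (wreathLift hs hcomm)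
    ⟨wreathLift_injective hs hcomm hf hrange, wreathLift_surjective hs hcomm hcover⟩).symm⟩

end WreathRecognition

/-! ### The graph `Δ` -/

section LinkGraph

open theta rootedSum

variable {n m : ℕ} {WT WΛ : Fin n → Type} {WΥ WΘ : Type}
  {TT : ∀ j, SimpleGraph (WT j)} {TΛ : ∀ j, SimpleGraph (WΛ j)}
  {TΥ : SimpleGraph WΥ} {TΘ : SimpleGraph WΘ}
  {tT : ∀ j, WT j} {tΛ : ∀ j, WΛ j} {tΥ : WΥ} {tΘ : WΘ}

/-- The vertex types of the trees attached to `theta n n m`: `Υ` at `t = v`, `Θ` at `r = u`, the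
same tree `T_j` at `a_j` and at `b_j`, and a single vertex along the third path. -/
def linkFiber (m : ℕ) (WT : Fin n → Type) (WΥ WΘ : Type) : ThetaV n n m → Type
  | .u => WΘ
  | .v => WΥ
  | .x1 j => WT j
  | .x2 j => WT j
  | .x3 _ => Unit

/-- The trees on the vertex types `linkFiber`. -/
def linkTree (m : ℕ) (TT : ∀ j, SimpleGraph (WT j)) (TΥ : SimpleGraph WΥ) (TΘ : SimpleGraph WΘ) :
    ∀ b, SimpleGraph (linkFiber m WT WΥ WΘ b)
  | .u => TΘ
  | .v => TΥ
  | .x1 j => TT j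
  | .x2 j => TT j
  | .x3 _ => ⊥

/-- The roots of the trees `linkTree`. -/
def linkRoot (m : ℕ) (tT : ∀ j, WT j) (tΥ : WΥ) (tΘ : WΘ) : ∀ b, linkFiber m WT WΥ WΘ b
  | .u => tΘ
  | .v => tΥ
  | .x1 j => tT j
  | .x2 j => tT j
  | .x3 _ => ()

variable (m TT TΥ TΘ tT tΥ tΘ) in
/-- The graph `Δ` in the case `Λ_j = T_j`, as a rooted sum over `theta n n m`. -/
abbrev linkGraph :
    SimpleGraph (Σ b, linkFiber m WT WΥ WΘ b) :=
  rootedSum (theta n n m) (linkTree m TT TΥ TΘ) (linkRoot m tT tΥ tΘ)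

theorem isTree_linkTree (hTT : ∀ j, (TT j).IsTree) (hTΥ : TΥ.IsTree) (hTΘ : TΘ.IsTree) :
    ∀ b, (linkTree m TT TΥ TΘ b).IsTree
  | .u => hTΘ
  | .v => hTΥ
  | .x1 j => hTT j
  | .x2 j => hTT j
  | .x3 _ => IsTree.of_subsingleton (V := Unit)

variable (m TT TΥ TΘ tT tΥ tΘ) in
/-- Root-fixing automorphisms of the attached trees, sorted by attachment vertex. -/
def linkStabEquiv :
    (autStab TΥ tΥ × autStab TΘ tΘ) ×
        (∀ j, autStab (TT j) (tT j)) × (∀ j, autStab (TT j) (tT j)) ≃*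
      ∀ b, autStab (linkTree m TT TΥ TΘ b) (linkRoot m tT tΥ tΘ b) where
  toFun z
    | .u => z.1.2
    | .v => z.1.1
    | .x1 j => z.2.1 j
    | .x2 j => z.2.2 j
    | .x3 _ => 1
  invFun g := ((g .v, g .u), fun j => g (.x1 j), fun j => g (.x2 j))
  left_inv _ := rfl
  right_inv g := by
    funext b
    rcases b with _ | _ | _ | _ | _
    case x3 => exact Subtype.ext (RelIso.ext fun _ => Subsingleton.elim (α := Unit) _ _)
    all_goals rfl
  map_mul' _ _ := by
    funext b
    rcases b with _ | _ | _ | _ | _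
    case x3 => exact (mul_one _).symm
    all_goals rfl

variable (m TT TΥ TΘ tT tΥ tΘ) in
/-- The action on `linkGraph` of the root-fixing automorphisms of the attached trees. -/
def linkAction :
    (autStab TΥ tΥ × autStab TΘ tΘ) ×
        (∀ j, autStab (TT j) (tT j)) × (∀ j, autStab (TT j) (tT j)) →*
      (linkGraph m TT TΥ TΘ tT tΥ tΘ ≃g linkGraph m TT TΥ TΘ tT tΥ tΘ) :=
  (fiberwise _ _ _).comp (linkStabEquiv m TT TΥ TΘ tT tΥ tΘ).toMonoidHom

theorem linkAction_injective : Function.Injective (linkAction m TT TΥ TΘ tT tΥ tΘ) :=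
  fiberwise_injective.comp (MulEquiv.injective _)

theorem range_linkAction : (linkAction m TT TΥ TΘ tT tΥ tΘ).range =
    (fiberwise (theta n n m) (linkTree m TT TΥ TΘ) (linkRoot m tT tΥ tΘ)).range := by
  rw [linkAction, ← MonoidHom.map_range, MonoidHom.range_eq_top.2 (MulEquiv.surjective _),
    ← MonoidHom.range_eq_map]

variable (m TT TΥ TΘ tT tΥ tΘ) in
/-- The tree at `b` coincides with the tree at the image of `b` under the exchange of paths. -/
def linkTreeSwap :
    ∀ b, RootedIso (linkTree m TT TΥ TΘ b) (linkRoot m tT tΥ tΘ b)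
      (linkTree m TT TΥ TΘ (swapPaths n m b)) (linkRoot m tT tΥ tΘ (swapPaths n m b))
  | .u => .refl TΘ tΘ
  | .v => .refl TΥ tΥ
  | .x1 j => .refl (TT j) (tT j)
  | .x2 j => .refl (TT j) (tT j)
  | .x3 _ => .refl ⊥ ()

variable (m TT TΥ TΘ tT tΥ tΘ) in
/-- The automorphism of `linkGraph` exchanging the two paths with `n` internal vertices together
with the trees attached to them. -/
def linkSwap :
    linkGraph m TT TΥ TΘ tT tΥ tΘ ≃g linkGraph m TT TΥ TΘ tT tΥ tΘ :=
  congr (swapPaths n m) (linkTreeSwap m TT TΥ TΘ tT tΥ tΘ)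

theorem linkSwap_mul_self :
    linkSwap m TT TΥ TΘ tT tΥ tΘ * linkSwap m TT TΥ TΘ tT tΥ tΘ = 1 := by
  refine RelIso.ext ?_
  rintro ⟨_ | _ | _ | _ | _, w⟩ <;> rfl

theorem linkSwap_mul_linkAction (a : autStab TΥ tΥ × autStab TΘ tΘ)
    (x y : ∀ j, autStab (TT j) (tT j)) :
    linkSwap m TT TΥ TΘ tT tΥ tΘ * linkAction m TT TΥ TΘ tT tΥ tΘ (a, x, y) =
      linkAction m TT TΥ TΘ tT tΥ tΘ (a, y, x) * linkSwap m TT TΥ TΘ tT tΥ tΘ := by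
  refine RelIso.ext ?_
  rintro ⟨_ | _ | _ | _ | _, w⟩ <;> rfl

theorem linkSwap_notMem_range (hn : 0 < n) :
    linkSwap m TT TΥ TΘ tT tΥ tΘ ∉ (linkAction m TT TΥ TΘ tT tΥ tΘ).range := by
  rintro ⟨z, hz⟩
  have hfst := congrArg Sigma.fst (DFunLike.congr_fun hz
    (⟨.x1 ⟨0, hn⟩, tT ⟨0, hn⟩⟩ : Σ b, linkFiber m WT WΥ WΘ b))
  exact nomatch (hfst : ThetaV.x1 ⟨0, hn⟩ = ThetaV.x2 ⟨0, hn⟩)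

theorem subsingleton_linkFiber {k : ℕ} (hk : k < m) :
    Subsingleton (linkFiber m WT WΥ WΘ (pathVertex 2 (k + 1))) := by
  have hx : (pathVertex 2 (k + 1) : ThetaV n n m) = .x3 ⟨k, hk⟩ := dif_pos hk
  rw [hx]
  exact inferInstanceAs (Subsingleton Unit)

theorem nontrivial_linkFiber {c : Fin 3} (hc : c ≠ 2) {j : Fin n} (hj : Nontrivial (WT j)) :
    Nontrivial (linkFiber m WT WΥ WΘ (pathVertex c (j + 1))) := by
  obtain rfl | rfl : c = 0 ∨ c = 1 := by omega
  · have hx : (pathVertex 0 (j + 1) : ThetaV n n m) = .x1 j := dif_pos j.isLt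
    rwa [hx]
  · have hx : (pathVertex 1 (j + 1) : ThetaV n n m) = .x2 j := dif_pos j.isLt
    rwa [hx]

theorem apply_v_eq_v_of_rootedIso (hn : 0 < n) (hne : ∀ e : TΥ ≃g TΘ, e tΥ ≠ tΘ)
    (φ : theta n n m ≃g theta n n m)
    (g : RootedIso TΥ tΥ (linkTree m TT TΥ TΘ (φ .v)) (linkRoot m tT tΥ tΘ (φ .v))) :
    φ .v = .v := by
  refine (apply_v_eq_u_or_eq_v (isProper_of_pos hn) φ).resolve_left fun hu => ?_
  rw [hu] at g
  exact hne g.1 g.2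

theorem perm_apply_two_of_linkFiber_equiv (hside : m ≠ n ∨ ∃ j, Nontrivial (WT j))
    {s : Equiv.Perm (Fin 3)}
    (hs : ∀ c, numInternal n n m (s c) = numInternal n n m c)
    (hfiber : ∀ k, Nonempty (linkFiber m WT WΥ WΘ (pathVertex 2 k) ≃
      linkFiber m WT WΥ WΘ (pathVertex (s 2) k))) : s 2 = 2 := by
  by_contra hs2
  have hnm : n = m := (numInternal_of_ne_two hs2).symm.trans (hs 2)
  obtain ⟨j, hj⟩ := hside.resolve_left (not_not.2 hnm.symm)
  obtain ⟨e⟩ := hfiber (j + 1)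
  have hsub := subsingleton_linkFiber (WT := WT) (WΥ := WΥ) (WΘ := WΘ) (j.isLt.trans_eq hnm)
  have hnontriv := nontrivial_linkFiber (m := m) (WΥ := WΥ) (WΘ := WΘ) hs2 hj
  exact not_subsingleton _ e.symm.subsingleton

theorem mem_range_or_mul_linkSwap_mem_range (hn : 0 < n) (hTT : ∀ j, (TT j).IsTree)
    (hTΥ : TΥ.IsTree) (hTΘ : TΘ.IsTree) (hne : ∀ e : TΥ ≃g TΘ, e tΥ ≠ tΘ)
    (hside : m ≠ n ∨ ∃ j, Nontrivial (WT j))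
    (f : linkGraph m TT TΥ TΘ tT tΥ tΘ ≃g linkGraph m TT TΥ TΘ tT tΥ tΘ) :
    f ∈ (linkAction m TT TΥ TΘ tT tΥ tΘ).range ∨
      f * linkSwap m TT TΥ TΘ tT tΥ tΘ ∈ (linkAction m TT TΥ TΘ tT tΥ tΘ).range := by
  have hproper : IsProper n n m := isProper_of_pos hn
  have htree := isTree_linkTree (m := m) hTT hTΥ hTΘ
  obtain ⟨φ, g, rfl⟩ := exists_eq_congr (neighborSet_nontrivial hproper)
    (neighborSet_nontrivial hproper) htree htree f
  obtain ⟨s, hs, hφ⟩ := exists_perm_apply_pathVertex hproper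
    (apply_v_eq_v_of_rootedIso hn hne φ (g .v))
  have hs2 : s 2 = 2 :=
    perm_apply_two_of_linkFiber_equiv hside hs fun k => ⟨hφ 2 k ▸ (g _).1.toEquiv⟩
  rw [range_linkAction]
  rcases eq_one_or_eq_swapPaths hs2 hφ with hone | rfl
  · exact .inl (congr_mem_range_fiberwise hone g)
  · rw [linkSwap, congr_mul_congr]
    exact .inr (congr_mem_range_fiberwise swapPaths_mul_self _)

theorem stmt5x_injective : Function.Injective (stmt5x n m) := by
  rintro ((_ | _) | (_ | _)) ((_ | _) | (_ | _)) h <;> cases h <;> rfl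

/-- Rooted isomorphisms from the trees attached in `stmt5Graph` to the fibres of `linkGraph`. -/
def linkAttach (m : ℕ) (TΥ : SimpleGraph WΥ) (TΘ : SimpleGraph WΘ) (tΥ : WΥ) (tΘ : WΘ)
    (e : ∀ j, RootedIso (TT j) (tT j) (TΛ j) (tΛ j)) :
    ∀ i, RootedIso (stmt5T TT TΛ TΥ TΘ i) (stmt5root tT tΛ tΥ tΘ i)
      (linkTree m TT TΥ TΘ (stmt5x n m i)) (linkRoot m tT tΥ tΘ (stmt5x n m i))
  | .inl (.inl j) => .refl (TT j) (tT j)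
  | .inl (.inr j) => (e j).symm
  | .inr (.inl _) => .refl TΥ tΥ
  | .inr (.inr _) => .refl TΘ tΘ

theorem mem_range_stmt5x_of_ne_linkRoot :
    ∀ b (w : linkFiber m WT WΥ WΘ b), w ≠ linkRoot m tT tΥ tΘ b → b ∈ Set.range (stmt5x n m)
  | .u, _, _ => ⟨.inr (.inr ()), rfl⟩
  | .v, _, _ => ⟨.inr (.inl ()), rfl⟩
  | .x1 j, _, _ => ⟨.inl (.inl j), rfl⟩
  | .x2 j, _, _ => ⟨.inl (.inr j), rfl⟩
  | .x3 _, _, hw => (hw rfl).elim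

/-- Since `Λ_j ≅ T_j` as rooted trees, `Δ` is isomorphic to `linkGraph`. -/
noncomputable def stmt5GraphIso (m : ℕ) (TΥ : SimpleGraph WΥ) (TΘ : SimpleGraph WΘ) (tΥ : WΥ)
    (tΘ : WΘ) (e : ∀ j, RootedIso (TT j) (tT j) (TΛ j) (tΛ j)) :
    stmt5Graph n m TT TΛ TΥ TΘ tT tΛ tΥ tΘ ≃g linkGraph m TT TΥ TΘ tT tΥ tΘ :=
  attachTreesIso (linkAttach m TΥ TΘ tΥ tΘ e) stmt5x_injective mem_range_stmt5x_of_ne_linkRoot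

end LinkGraph

theorem aut_bicyclic_link_type_general_general
    (n : ℕ) (hn : 0 < n) (m : ℕ) {WT WΛ : Fin n → Type} {WΥ WΘ : Type}
    (TT : ∀ j, SimpleGraph (WT j)) (TΛ : ∀ j, SimpleGraph (WΛ j))
    (TΥ : SimpleGraph WΥ) (TΘ : SimpleGraph WΘ)
    (tT : ∀ j, WT j) (tΛ : ∀ j, WΛ j) (tΥ : WΥ) (tΘ : WΘ)
    (hTtree : ∀ j, (TT j).IsTree) (hΥtree : TΥ.IsTree) (hΘtree : TΘ.IsTree)
    (hiso : ∀ j, ∃ e : TT j ≃g TΛ j, e (tT j) = tΛ j)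
    (hne : ∀ e : TΥ ≃g TΘ, e tΥ ≠ tΘ)
    (hside : m + 1 ≠ n + 1 ∨ ∃ j, Nontrivial (WT j)) :
    Nonempty ((stmt5Graph n m TT TΛ TΥ TΘ tT tΛ tΥ tΘ ≃g
        stmt5Graph n m TT TΛ TΥ TΘ tT tΛ tΥ tΘ) ≃*
      ↥(autStab TΥ tΥ) × ↥(autStab TΘ tΘ) ×
        wreathZ2 (∀ j, ↥(autStab (TT j) (tT j)))) := by
  choose e he using hiso
  have hlen : m ≠ n ∨ ∃ j, Nontrivial (WT j) := by simpa only [ne_eq, add_left_inj] using hside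
  obtain ⟨autEquiv⟩ := nonempty_mulEquiv_prod_wreathZ2 linkAction_injective linkSwap_mul_self
    linkSwap_mul_linkAction (linkSwap_notMem_range hn)
    (mem_range_or_mul_linkSwap_mem_range hn hTtree hΥtree hΘtree hne hlen)
  let iso := stmt5GraphIso m TΥ TΘ tΥ tΘ fun j => ⟨e j, he j⟩
  exact ⟨(autCongr iso).trans (autEquiv.trans .prodAssoc)⟩

/-- Corollary 2.5. With `T_i ≅ Λ_i` as rooted trees for each `i`,
`Υ ≇ Θ` as rooted trees, and `ℓ ≠ n + 1` or some `T_i` nontrivial, the automorphism group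
of `Δ` is `H × K × ((G₁ × ⋯ × G_n) ≀ Z₂)` where `G_i = Aut(T_i)_root`, `H = Aut(Υ)_root`
and `K = Aut(Θ)_root`. -/
theorem aut_bicyclic_link_type_general
    (n : ℕ) (hn : 0 < n) (m : ℕ)
    {WT WΛ : Fin n → Type} {WΥ WΘ : Type}
    [∀ j, Fintype (WT j)] [∀ j, Fintype (WΛ j)] [Fintype WΥ] [Fintype WΘ]
    (TT : ∀ j, SimpleGraph (WT j)) (TΛ : ∀ j, SimpleGraph (WΛ j))
    (TΥ : SimpleGraph WΥ) (TΘ : SimpleGraph WΘ)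
    (tT : ∀ j, WT j) (tΛ : ∀ j, WΛ j) (tΥ : WΥ) (tΘ : WΘ)
    (hTtree : ∀ j, (TT j).IsTree) (hΛtree : ∀ j, (TΛ j).IsTree)
    (hΥtree : TΥ.IsTree) (hΘtree : TΘ.IsTree)
    (hiso : ∀ j, ∃ e : TT j ≃g TΛ j, e (tT j) = tΛ j)
    (hne : ∀ e : TΥ ≃g TΘ, e tΥ ≠ tΘ)
    (hside : m + 1 ≠ n + 1 ∨ ∃ j, Nontrivial (WT j)) :
    Nonempty ((stmt5Graph n m TT TΛ TΥ TΘ tT tΛ tΥ tΘ ≃g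
        stmt5Graph n m TT TΛ TΥ TΘ tT tΛ tΥ tΘ) ≃*
      ↥(autStab TΥ tΥ) × ↥(autStab TΘ tΘ) ×
        wreathZ2 (∀ j, ↥(autStab (TT j) (tT j)))) := by
  exact aut_bicyclic_link_type_general_general n hn m TT TΛ TΥ TΘ tT tΛ tΥ tΘ hTtree hΥtree hΘtree
    hiso hne hside
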